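/- arXiv:2208.13981 — 2 statements merged into one kernel-verified Lean document; each statement's English description precedes it below -/
import Mathlib

section
/- Suppose the filtered velocity tracking error q_r : ℝ → (Fin n → ℝ) is differentiable and satisfies the closed-loop equation M(t) q_r′(t) = −(M(t) + C(t)) q_r(t) for all t. Let P be a matrix such that P · M(t) is symmetric for all t and P · C(t) + C(t)ᵀ · P = P · M′(t) for all t. Then the function W(t) = (1/2) q_r(t)ᵀ P M(t) q_r(t) satisfies W′(t) = −2 W(t) for all t, and consequently W(t) = W(0) · exp(−2t) for all t ≥ 0. -/
/-!
Differentiating the quadratic form `qᵀ (P M) q` and using that `P M` is symmetric gives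
`2 qᵀ P M q' + qᵀ P M' q`. The closed-loop equation turns the first term into
`-2 qᵀ P M q - 2 qᵀ P C q`, while `P C + Cᵀ P = P M'` with `P` symmetric turns the second
into `2 qᵀ P C q`. The `C` terms cancel, which leaves `W' = -2 W`; hence `W(t) exp(2t)` has
zero derivative and is constant.
-/

open Matrix

/-- Product rule for `qᵀ A q`, with the matrix differentiated entrywise so that no norm on
matrices has to be chosen. -/
theorem hasDerivAt_quadForm {n : ℕ} {A : ℝ → Matrix (Fin n) (Fin n) ℝ}
    {A' : Matrix (Fin n) (Fin n) ℝ} {q : ℝ → Fin n → ℝ} {q' : Fin n → ℝ} {t : ℝ}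
    (hA : ∀ i j, HasDerivAt (fun s => A s i j) (A' i j) t) (hq : HasDerivAt q q' t) :
    HasDerivAt (fun s => q s ⬝ᵥ (A s *ᵥ q s))
      (q' ⬝ᵥ (A t *ᵥ q t) + q t ⬝ᵥ (A' *ᵥ q t + A t *ᵥ q')) t := by
  have hq' := hasDerivAt_pi.1 hq
  have h : HasDerivAt (fun s => ∑ i, q s i * ∑ j, A s i j * q s j)
      (∑ i, (q' i * ∑ j, A t i j * q t j
        + q t i * ∑ j, (A' i j * q t j + A t i j * q' j))) t :=
    HasDerivAt.fun_sum fun i _ => (hq' i).mul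
      (HasDerivAt.fun_sum fun j _ => (hA i j).mul (hq' j))
  simpa only [dotProduct, mulVec, Pi.add_apply, Finset.sum_add_distrib] using h

/-- Solutions of `W' = -2 W` are exponentials. -/
theorem eq_mul_exp_of_hasDerivAt {W : ℝ → ℝ} (hW : ∀ t, HasDerivAt W (-2 * W t) t) (t : ℝ) :
    W t = W 0 * Real.exp (-2 * t) := by
  have hE : ∀ s : ℝ, HasDerivAt (fun s => W s * Real.exp (2 * s)) 0 s := fun s => by
    have h := (hW s).mul (((hasDerivAt_id s).const_mul 2).exp)
    refine h.congr_deriv ?_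
    simp only [id]
    ring
  have hc := is_const_of_deriv_eq_zero (fun s => (hE s).differentiableAt)
    (fun s => (hE s).deriv) t 0
  simp only [mul_zero, Real.exp_zero, mul_one] at hc
  rw [← hc, mul_assoc, ← Real.exp_add]
  simp

/-- If the filtered velocity tracking error satisfies the closed-loop
equation `M q_r′ = −(M + C) q_r`, and `P` is such that `P M(t)` is symmetric with
`P C(t) + C(t)ᵀ P = P M′(t)` for all `t`, then `W(t) = (1/2) q_r(t)ᵀ P M(t) q_r(t)`
satisfies `W′ = −2 W`, and consequently `W(t) = W(0) · exp(−2t)` for `t ≥ 0`. -/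
theorem statement4 (n : ℕ) (hn : 1 ≤ n)
    (M M' C : ℝ → Matrix (Fin n) (Fin n) ℝ)
    (hMderiv : ∀ t : ℝ, ∀ i j : Fin n, HasDerivAt (fun s => M s i j) (M' t i j) t)
    (hMsymm : ∀ t : ℝ, (M t).IsSymm)
    (hMpd : ∀ t : ℝ, (M t).PosDef)
    (hCcont : ∀ i j : Fin n, Continuous fun t => C t i j)
    (P : Matrix (Fin n) (Fin n) ℝ) (hPsymm : P.IsSymm) (hPpd : P.PosDef)
    (qr qr' : ℝ → Fin n → ℝ)
    (hqr : ∀ t : ℝ, HasDerivAt qr (qr' t) t)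
    (hclosed : ∀ t : ℝ, M t *ᵥ qr' t = -((M t + C t) *ᵥ qr t))
    (hPM : ∀ t : ℝ, (P * M t).IsSymm)
    (hPC : ∀ t : ℝ, P * C t + (C t)ᵀ * P = P * M' t) :
    (∀ t : ℝ, HasDerivAt (fun s => (1/2 : ℝ) * (qr s ⬝ᵥ ((P * M s) *ᵥ qr s)))
      (-2 * ((1/2 : ℝ) * (qr t ⬝ᵥ ((P * M t) *ᵥ qr t)))) t) ∧
    (∀ t : ℝ, 0 ≤ t →
      (1/2 : ℝ) * (qr t ⬝ᵥ ((P * M t) *ᵥ qr t))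
        = (1/2 : ℝ) * (qr 0 ⬝ᵥ ((P * M 0) *ᵥ qr 0)) * Real.exp (-2 * t)) := by
  have key : ∀ t : ℝ, HasDerivAt (fun s => (1/2 : ℝ) * (qr s ⬝ᵥ ((P * M s) *ᵥ qr s)))
      (-2 * ((1/2 : ℝ) * (qr t ⬝ᵥ ((P * M t) *ᵥ qr t)))) t := by
    intro t
    have hA : ∀ i j, HasDerivAt (fun s => (P * M s) i j) ((P * M' t) i j) t := fun i j => by
      simp only [mul_apply]
      exact HasDerivAt.fun_sum fun k _ => (hMderiv t k j).const_mul (P i k)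
    refine ((hasDerivAt_quadForm hA (hqr t)).const_mul (1/2 : ℝ)).congr_deriv ?_
    have h1 : qr' t ⬝ᵥ ((P * M t) *ᵥ qr t) = qr t ⬝ᵥ ((P * M t) *ᵥ qr' t) := by
      rw [← dotProduct_transpose_mulVec, (hPM t).eq]
    have h2 : qr t ⬝ᵥ ((P * M t) *ᵥ qr' t)
        = -(qr t ⬝ᵥ ((P * M t) *ᵥ qr t)) - qr t ⬝ᵥ ((P * C t) *ᵥ qr t) := by
      rw [← mulVec_mulVec, hclosed t, mulVec_neg, mulVec_mulVec, mul_add, add_mulVec,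
        dotProduct_neg, dotProduct_add]
      ring
    have h3 : qr t ⬝ᵥ (((C t)ᵀ * P) *ᵥ qr t) = qr t ⬝ᵥ ((P * C t) *ᵥ qr t) := by
      have h : (C t)ᵀ * P = (P * C t)ᵀ := by rw [transpose_mul, hPsymm.eq]
      rw [h, dotProduct_transpose_mulVec]
    rw [dotProduct_add, h1, h2, ← hPC t, add_mulVec, dotProduct_add, h3]
    ring
  exact ⟨key, fun t _ => eq_mul_exp_of_hasDerivAt key t⟩
end

section
/- Suppose the trajectory q satisfies M(t) q̈(t) + C(t) q̇(t) + G(t) = τ(t) with the control law τ(t) = M(t)(q̈_d(t) + λ q̃′(t) + q_r(t)) + C(t)(q̇(t) + q_r(t)) + G(t), where q̃(t) = q_d(t) − q(t) and q_r(t) = q̃′(t) + λ q̃(t) with λ > 0, λ ≠ 1. Assume M′(t) = C(t) + C(t)ᵀ for all t (skew-symmetry of M′ − 2C), that P M(t) is symmetric for all t with P C(t) + C(t)ᵀ P = P M′(t) for all t, and that P M is uniformly positive definite: there is μ > 0 with xᵀ (P M(t)) x ≥ μ ‖x‖² for all t and x. Then the closed-loop trajectories are exponentially stable: there exists K ≥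 0 such that, with rate μ₀ = min(λ, 1), both ‖q_r(t)‖ ≤ K · exp(−t) and ‖q_d(t) − q(t)‖ ≤ K · exp(−μ₀ t) hold for all t ≥ 0; in particular q(t) → q_d(t) as t → ∞. -/
/-!
With `V = q_rᵀ (P M) q_r`, the closed loop `M q_r′ + (M + C) q_r = 0`, the symmetry of `P M`
and `P C + Cᵀ P = P M′` give `V′ = -2 V`, so `V t = V 0 * exp (-2 t)`; uniform positivity of `P M`
turns this into `‖q_r‖ ≤ A exp (-t)` with `A = √(V 0 / μ)`. Each coordinate of the tracking error
then solves the scalar equation `e′ = -λ e + r` with `|r| ≤ A exp (-t)`, and variation of constants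
(`abs_le_of_linear_ode`, where `λ ≠ 1` is used) bounds it by a multiple of `exp (-min λ 1 * t)`.
-/

open Matrix

theorem hasDerivAt_quadratic {n : ℕ} {x : ℝ → Fin n → ℝ} {x' : Fin n → ℝ}
    {A : ℝ → Matrix (Fin n) (Fin n) ℝ} {A' : Matrix (Fin n) (Fin n) ℝ} {t : ℝ}
    (hx : HasDerivAt x x' t) (hA : ∀ i j, HasDerivAt (fun s => A s i j) (A' i j) t) :
    HasDerivAt (fun s => x s ⬝ᵥ (A s *ᵥ x s))
      (x' ⬝ᵥ (A t *ᵥ x t) + x t ⬝ᵥ (A' *ᵥ x t) + x t ⬝ᵥ (A t *ᵥ x')) t := by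
  have hxi := hasDerivAt_pi.1 hx
  have h : HasDerivAt (fun s => ∑ i, x s i * ∑ j, A s i j * x s j)
      (∑ i, (x' i * ∑ j, A t i j * x t j +
        x t i * ∑ j, (A' i j * x t j + A t i j * x' j))) t :=
    HasDerivAt.fun_sum fun i _ =>
      (hxi i).mul (HasDerivAt.fun_sum fun j _ => (hA i j).mul (hxi j))
  refine h.congr_deriv ?_
  simp only [dotProduct, mulVec, Finset.sum_add_distrib, mul_add, add_assoc]

/-- One-sided form of `abs_le_of_linear_ode`: the function
`exp (a s) * e s - A * exp ((a - 1) s) / (a - 1)` is nonincreasing on `[0, ∞)`. -/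
theorem le_of_linear_ode {a A : ℝ} (ha1 : a ≠ 1) (hA : 0 ≤ A) {e r : ℝ → ℝ}
    (he : ∀ t, HasDerivAt e (r t - a * e t) t)
    (hr : ∀ t, 0 ≤ t → r t ≤ A * Real.exp (-t)) {t : ℝ} (ht : 0 ≤ t) :
    e t ≤ (|e 0| + A / |a - 1|) * Real.exp (-(min a 1) * t) := by
  have hne : a - 1 ≠ 0 := sub_ne_zero.2 ha1
  have hd : ∀ s, HasDerivAt
      (fun s => Real.exp (a * s) * e s - A * Real.exp ((a - 1) * s) / (a - 1))
      (Real.exp (a * s) * r s - A * Real.exp ((a - 1) * s)) s := by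
    intro s
    have h1 := (((hasDerivAt_id s).const_mul a).exp).mul (he s)
    have h2 := ((((hasDerivAt_id s).const_mul (a - 1)).exp).const_mul A).div_const (a - 1)
    refine (h1.sub h2).congr_deriv ?_
    simp only [id, mul_one]
    field_simp
    ring
  have hanti : AntitoneOn
      (fun s => Real.exp (a * s) * e s - A * Real.exp ((a - 1) * s) / (a - 1)) (Set.Ici 0) := by
    refine antitoneOn_of_deriv_nonpos (convex_Ici 0)
      (fun s _ => (hd s).continuousAt.continuousWithinAt)
      (fun s _ => (hd s).differentiableAt.differentiableWithinAt) fun s hs => ?_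
    rw [interior_Ici] at hs
    rw [(hd s).deriv]
    have h := mul_le_mul_of_nonneg_left (hr s (le_of_lt hs)) (Real.exp_pos (a * s)).le
    have hexp : Real.exp ((a - 1) * s) = Real.exp (a * s) * Real.exp (-s) := by
      rw [← Real.exp_add]; ring_nf
    rw [hexp]
    linarith
  have h0 := hanti (Set.mem_Ici.2 le_rfl) (Set.mem_Ici.2 ht) ht
  simp only [mul_zero, Real.exp_zero, one_mul, mul_one] at h0
  have hm := mul_le_mul_of_nonneg_left h0 (Real.exp_pos (-a * t)).le
  have e1 : Real.exp (-a * t) * Real.exp (a * t) = 1 := by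
    rw [← Real.exp_add]; simp
  have e2 : Real.exp (-a * t) * Real.exp ((a - 1) * t) = Real.exp (-t) := by
    rw [← Real.exp_add]; ring_nf
  have key : e t ≤ Real.exp (-a * t) * e 0
      + A * ((Real.exp (-t) - Real.exp (-a * t)) / (a - 1)) := by
    have l : Real.exp (-a * t) * (Real.exp (a * t) * e t - A * Real.exp ((a - 1) * t) / (a - 1))
        = e t - A * Real.exp (-t) / (a - 1) := by
      rw [← e2]
      linear_combination e t * e1
    rw [l] at hm
    have r : A * ((Real.exp (-t) - Real.exp (-a * t)) / (a - 1))
        = A * Real.exp (-t) / (a - 1) - Real.exp (-a * t) * (A / (a - 1)) := by ring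
    rw [r]
    linarith
  have ma : Real.exp (-a * t) ≤ Real.exp (-(min a 1) * t) := by
    apply Real.exp_le_exp.2
    nlinarith [min_le_left a 1]
  have m1 : Real.exp (-t) ≤ Real.exp (-(min a 1) * t) := by
    apply Real.exp_le_exp.2
    nlinarith [min_le_right a 1]
  have b1 : Real.exp (-a * t) * e 0 ≤ |e 0| * Real.exp (-(min a 1) * t) := by
    rw [mul_comm]
    exact mul_le_mul (le_abs_self _) ma (Real.exp_pos _).le (abs_nonneg _)
  have b2 : (Real.exp (-t) - Real.exp (-a * t)) / (a - 1)
      ≤ Real.exp (-(min a 1) * t) / |a - 1| := by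
    refine (le_abs_self _).trans ?_
    rw [abs_div]
    refine div_le_div_of_nonneg_right ?_ (abs_nonneg _)
    have p1 := Real.exp_pos (-t)
    have p2 := Real.exp_pos (-a * t)
    exact abs_le.2 ⟨by linarith, by linarith⟩
  calc e t ≤ _ := key
    _ ≤ |e 0| * Real.exp (-(min a 1) * t) + A * (Real.exp (-(min a 1) * t) / |a - 1|) :=
        add_le_add b1 (mul_le_mul_of_nonneg_left b2 hA)
    _ = _ := by ring

/-- A solution of `e′ = -a e + r` with `r = O(exp (-t))` decays at rate `min a 1`. When `a = 1`
resonance produces an extra factor `t`, so the constant blows up as `a → 1`. -/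
theorem abs_le_of_linear_ode {a A : ℝ} (ha1 : a ≠ 1) (hA : 0 ≤ A) {e r : ℝ → ℝ}
    (he : ∀ t, HasDerivAt e (r t - a * e t) t)
    (hr : ∀ t, 0 ≤ t → |r t| ≤ A * Real.exp (-t)) {t : ℝ} (ht : 0 ≤ t) :
    |e t| ≤ (|e 0| + A / |a - 1|) * Real.exp (-(min a 1) * t) := by
  refine abs_le'.2 ⟨le_of_linear_ode ha1 hA he (fun s hs => (le_abs_self _).trans (hr s hs)) ht, ?_⟩
  have h := le_of_linear_ode (e := fun s => -e s) (r := fun s => -r s) ha1 hA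
    (fun s => (he s).fun_neg.congr_deriv (by ring))
    (fun s hs => (neg_le_abs _).trans (hr s hs)) ht
  simpa only [abs_neg] using h

theorem eq_exp_of_hasDerivAt {V : ℝ → ℝ} {c : ℝ} (hV : ∀ t, HasDerivAt V (c * V t) t) (t : ℝ) :
    V t = V 0 * Real.exp (c * t) := by
  have hd : ∀ s, HasDerivAt (fun s => V s * Real.exp (-c * s)) 0 s := by
    intro s
    refine ((hV s).mul (((hasDerivAt_id s).const_mul (-c)).exp)).congr_deriv ?_
    simp only [id, mul_one]
    ring
  have h := is_const_of_deriv_eq_zero (fun s => (hd s).differentiableAt)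
    (fun s => (hd s).deriv) t 0
  simp only [mul_zero, Real.exp_zero, mul_one] at h
  rw [← h, mul_assoc, ← Real.exp_add]
  simp

theorem abs_coord_le_sqrt {n : ℕ} (x : Fin n → ℝ) (i : Fin n) : |x i| ≤ Real.sqrt (x ⬝ᵥ x) := by
  apply Real.abs_le_sqrt
  rw [sq]
  exact Finset.single_le_sum (f := fun j => x j * x j) (fun j _ => mul_self_nonneg _)
    (Finset.mem_univ i)

/-- For the mechanical system `M q̈ + C q̇ + G = τ` under the control
law `τ = M(q̈_d + λ q̃′ + q_r) + C(q̇ + q_r) + G` (with `q̃ = q_d − q`,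
`q_r = q̃′ + λ q̃`, `λ > 0`, `λ ≠ 1`), assuming the skew-symmetry property
`M′ = C + Cᵀ`, that `P M(t)` is symmetric with `P C(t) + C(t)ᵀ P = P M′(t)`, and
that `P M` is uniformly positive definite (`xᵀ (P M(t)) x ≥ μ ‖x‖²`, `μ > 0`),
the closed-loop trajectories are exponentially stable: there is `K ≥ 0` with
`‖q_r(t)‖ ≤ K exp(−t)` and `‖q_d(t) − q(t)‖ ≤ K exp(−min(λ,1) t)` for `t ≥ 0`;
in particular `q(t) → q_d(t)` as `t → ∞`.
(Here `‖x‖ = Real.sqrt (x ⬝ᵥ x)` is the Euclidean norm.) -/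
theorem statement7 (n : ℕ) (hn : 1 ≤ n) (lam : ℝ) (hlam : 0 < lam) (hlam1 : lam ≠ 1)
    (q q' q'' qd qd' qd'' : ℝ → Fin n → ℝ)
    (hq : ∀ t : ℝ, HasDerivAt q (q' t) t)
    (hq' : ∀ t : ℝ, HasDerivAt q' (q'' t) t)
    (hqd : ∀ t : ℝ, HasDerivAt qd (qd' t) t)
    (hqd' : ∀ t : ℝ, HasDerivAt qd' (qd'' t) t)
    (M M' C : ℝ → Matrix (Fin n) (Fin n) ℝ) (G τ : ℝ → Fin n → ℝ)
    (hMderiv : ∀ t : ℝ, ∀ i j : Fin n, HasDerivAt (fun s => M s i j) (M' t i j) t)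
    (hMsymm : ∀ t : ℝ, (M t).IsSymm)
    (hMpd : ∀ t : ℝ, (M t).PosDef)
    (hCcont : ∀ i j : Fin n, Continuous fun t => C t i j)
    (qr : ℝ → Fin n → ℝ)
    (hqrdef : ∀ t : ℝ, qr t = (qd' t - q' t) + lam • (qd t - q t))
    (hsys : ∀ t : ℝ, M t *ᵥ q'' t + C t *ᵥ q' t + G t = τ t)
    (hctrl : ∀ t : ℝ, τ t
      = M t *ᵥ (qd'' t + lam • (qd' t - q' t) + qr t)
        + C t *ᵥ (q' t + qr t) + G t)
    (hskew : ∀ t : ℝ, M' t = C t + (C t)ᵀ)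
    (P : Matrix (Fin n) (Fin n) ℝ) (hPsymm : P.IsSymm) (hPpd : P.PosDef)
    (hPM : ∀ t : ℝ, (P * M t).IsSymm)
    (hPC : ∀ t : ℝ, P * C t + (C t)ᵀ * P = P * M' t)
    (μ : ℝ) (hμ : 0 < μ)
    (hunif : ∀ t : ℝ, ∀ x : Fin n → ℝ, μ * (x ⬝ᵥ x) ≤ x ⬝ᵥ ((P * M t) *ᵥ x)) :
    ∃ K : ℝ, 0 ≤ K ∧
      (∀ t : ℝ, 0 ≤ t → Real.sqrt (qr t ⬝ᵥ qr t) ≤ K * Real.exp (-t)) ∧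
      (∀ t : ℝ, 0 ≤ t →
        Real.sqrt ((qd t - q t) ⬝ᵥ (qd t - q t)) ≤ K * Real.exp (-(min lam 1) * t)) ∧
      Filter.Tendsto (fun t => qd t - q t) Filter.atTop (nhds 0) := by
  have hqr : ∀ t, HasDerivAt qr ((qd'' t - q'' t) + lam • (qd' t - q' t)) t := by
    intro t
    have h := ((hqd' t).sub (hq' t)).add (((hqd t).sub (hq t)).const_smul lam)
    have heq : qr = (qd' - q') + lam • (qd - q) := funext hqrdef
    rw [heq]
    exact h
  have hloop : ∀ t, M t *ᵥ ((qd'' t - q'' t) + lam • (qd' t - q' t))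
      = -(M t *ᵥ qr t) - C t *ᵥ qr t := by
    intro t
    have h := (hsys t).trans (hctrl t)
    simp only [mulVec_add, mulVec_sub] at h ⊢
    funext i
    have hi := congrFun h i
    simp only [Pi.add_apply, Pi.sub_apply, Pi.neg_apply] at hi ⊢
    linarith
  have hV : ∀ t, HasDerivAt (fun s => qr s ⬝ᵥ ((P * M s) *ᵥ qr s))
      (-2 * (qr t ⬝ᵥ ((P * M t) *ᵥ qr t))) t := by
    intro t
    have hPMd : ∀ i j, HasDerivAt (fun s => (P * M s) i j) ((P * M' t) i j) t := by
      intro i j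
      simp only [Matrix.mul_apply]
      exact HasDerivAt.fun_sum fun k _ => (hMderiv t k j).const_mul (P i k)
    refine (hasDerivAt_quadratic (hqr t) hPMd).congr_deriv ?_
    set v := (qd'' t - q'' t) + lam • (qd' t - q' t) with hv
    have hsw : v ⬝ᵥ ((P * M t) *ᵥ qr t) = qr t ⬝ᵥ ((P * M t) *ᵥ v) := by
      rw [dotProduct_mulVec, ← mulVec_transpose, hPM t, dotProduct_comm]
    have h1 : qr t ⬝ᵥ ((P * M t) *ᵥ v)
        = -(qr t ⬝ᵥ ((P * M t) *ᵥ qr t)) - qr t ⬝ᵥ ((P * C t) *ᵥ qr t) := by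
      rw [← mulVec_mulVec, hloop t, mulVec_sub, mulVec_neg, dotProduct_sub, dotProduct_neg,
        mulVec_mulVec, mulVec_mulVec]
    have htr : (C t)ᵀ * P = (P * C t)ᵀ := by rw [transpose_mul, hPsymm]
    have h2 : qr t ⬝ᵥ ((P * M' t) *ᵥ qr t) = 2 * (qr t ⬝ᵥ ((P * C t) *ᵥ qr t)) := by
      rw [← hPC t, htr, add_mulVec, dotProduct_add, mulVec_transpose,
        dotProduct_comm (qr t) (qr t ᵥ* _), ← dotProduct_mulVec]
      ring
    rw [hsw, h1, h2]
    ring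
  have hVexp := eq_exp_of_hasDerivAt hV
  set V0 := qr 0 ⬝ᵥ ((P * M 0) *ᵥ qr 0) with hV0
  set A := Real.sqrt (V0 / μ) with hA
  have hA0 : 0 ≤ A := Real.sqrt_nonneg _
  have hqrb : ∀ t, Real.sqrt (qr t ⬝ᵥ qr t) ≤ A * Real.exp (-t) := by
    intro t
    have h : qr t ⬝ᵥ qr t ≤ V0 / μ * Real.exp (-t) ^ 2 := by
      have h1 := hunif t (qr t)
      rw [hVexp t] at h1
      have h2 : Real.exp (-2 * t) = Real.exp (-t) ^ 2 := by
        rw [← Real.exp_nat_mul]; push_cast; ring_nf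
      rw [h2] at h1
      rw [div_mul_eq_mul_div, le_div_iff₀ hμ]
      linarith
    calc Real.sqrt (qr t ⬝ᵥ qr t) ≤ Real.sqrt (V0 / μ * Real.exp (-t) ^ 2) := Real.sqrt_le_sqrt h
      _ = A * Real.exp (-t) := by
        rw [Real.sqrt_mul' _ (sq_nonneg _), Real.sqrt_sq (Real.exp_pos _).le]
  let B : Fin n → ℝ := fun i => |qd 0 i - q 0 i| + A / |lam - 1|
  have hcoord : ∀ i t, 0 ≤ t → |qd t i - q t i| ≤ B i * Real.exp (-(min lam 1) * t) := by
    intro i t ht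
    refine abs_le_of_linear_ode (e := fun s => qd s i - q s i) (r := fun s => qr s i) hlam1 hA0
      (fun s => ?_) (fun s _ => (abs_coord_le_sqrt _ i).trans (hqrb s)) ht
    refine ((hasDerivAt_pi.1 (hqd s) i).sub (hasDerivAt_pi.1 (hq s) i)).congr_deriv ?_
    rw [hqrdef s]
    simp only [Pi.add_apply, Pi.sub_apply, Pi.smul_apply, smul_eq_mul]
    ring
  have hnorm : ∀ t, 0 ≤ t → Real.sqrt ((qd t - q t) ⬝ᵥ (qd t - q t))
      ≤ Real.sqrt (B ⬝ᵥ B) * Real.exp (-(min lam 1) * t) := by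
    intro t ht
    rw [← Real.sqrt_sq (Real.exp_pos (-(min lam 1) * t)).le, ← Real.sqrt_mul' _ (sq_nonneg _)]
    apply Real.sqrt_le_sqrt
    simp only [dotProduct, Finset.sum_mul, Pi.sub_apply]
    refine Finset.sum_le_sum fun i _ => ?_
    have h := mul_self_le_mul_self (abs_nonneg _) (hcoord i t ht)
    rw [abs_mul_abs_self] at h
    linarith
  refine ⟨A + Real.sqrt (B ⬝ᵥ B), add_nonneg hA0 (Real.sqrt_nonneg _), fun t _ => ?_,
    fun t ht => ?_, ?_⟩
  · exact (hqrb t).trans (mul_le_mul_of_nonneg_right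
      (le_add_of_nonneg_right (Real.sqrt_nonneg _)) (Real.exp_pos _).le)
  · exact (hnorm t ht).trans (mul_le_mul_of_nonneg_right
      (le_add_of_nonneg_left hA0) (Real.exp_pos _).le)
  · refine tendsto_pi_nhds.2 fun i => ?_
    have hlim : Filter.Tendsto (fun t => B i * Real.exp (-(min lam 1) * t)) Filter.atTop
        (nhds 0) := by
      have hneg : -(min lam 1) < 0 := neg_lt_zero.2 (lt_min hlam one_pos)
      simpa using (Real.tendsto_exp_atBot.comp
        (Filter.tendsto_id.const_mul_atTop_of_neg hneg)).const_mul (B i)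
    refine squeeze_zero_norm' ?_ hlim
    filter_upwards [Filter.eventually_ge_atTop 0] with t ht
    exact hcoord i t ht
end
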